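/- Let V be a 3-dimensional real vector space, g a nondegenerate symmetric bilinear form on V, ξ ∈ V with g(ξ, ξ) = 1, and η := g(·, ξ). Let R : V × V → End(V) be a curvature-like tensor on (V, g) with Ricci tensor Ric, Ricci operator S and scalar curvature τ = trace(S), and let α be a real number. Suppose R(X,Y)ξ = α²(η(Y)X − η(X)Y) for all X, Y ∈ V. Then for all X, Y, Z ∈ V: R(X,Y)Z = (τ/2 − 2α²)(g(Y,Z)X − g(X,Z)Y) − (τ/2 − 3α²)(g(Y,Z)η(X) − g(X,Z)η(Y))ξ + (τ/2 − 3α²)(η(X)Y − η(Y)X)η(Z). (This is the algebraic content of the curvature formula for α-para Kenmotsu 3-manifolds.) -/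

import Mathlib

/-!
Let `G_A(X,Y)Z = g(AY,Z)AX - g(AX,Z)AY` be the Gauss curvature tensor of a `g`-self-adjoint
endomorphism `A`. The hypothesis on `R(X,Y)ξ` says that `R - α² G_id` annihilates `ξ`. A tensor with
the symmetries of `R` that annihilates `ξ` is a symmetric form on the bivectors of the plane `V/ξ`,
and these bivectors form a line; so `R - α² G_id = κ G_P`, with `P` the orthogonal projection
along `ξ`. The Ricci operator of `G_A` is `(tr A) A - A²`, so taking traces in
`R = α² G_id + κ G_P` gives `τ = 6α² + 2κ`, which determines `κ`.
-/

open Module (Basis finrank)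

section CommRing

variable {K V N : Type*} [CommRing K] [AddCommGroup V] [Module K V] [AddCommGroup N] [Module K N]

/-- The area form on the quotient by `b 0`, normalised to be `1` on `(b 1, b 2)`: the minor of the
last two coordinates. -/
noncomputable def quotientArea (b : Basis (Fin 3) K V) (X Y : V) : K :=
  b.repr X 1 * b.repr Y 2 - b.repr X 2 * b.repr Y 1

lemma isAlt_apply_eq_quotientArea_smul (b : Basis (Fin 3) K V) {B : V →ₗ[K] V →ₗ[K] N}
    (hB : B.IsAlt) (hB₀ : B (b 0) = 0) (X Y : V) :
    B X Y = quotientArea b X Y • B (b 1) (b 2) := by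
  have hB₀' (X : V) : B X (b 0) = 0 := by rw [← hB.neg, hB₀, LinearMap.zero_apply, neg_zero]
  have h₂₁ : B (b 2) (b 1) = -B (b 1) (b 2) := (hB.neg _ _).symm
  conv_lhs => rw [← b.sum_repr X, ← b.sum_repr Y]
  simp only [Fin.sum_univ_three, map_add, map_smul, LinearMap.add_apply, LinearMap.smul_apply,
    hB₀, hB₀', hB.self_eq_zero, h₂₁, LinearMap.zero_apply, quotientArea]
  module

/-- The `(0,4)`-tensor `g(R(X,Y)Z, W)` is a symmetric bilinear form on bivectors `X ∧ Y`, `Z ∧ W`.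
These are the symmetries of a curvature tensor other than the first Bianchi identity. -/
structure IsBivectorSymm (g : V →ₗ[K] V →ₗ[K] K) (R : V →ₗ[K] V →ₗ[K] V →ₗ[K] V) : Prop where
  isAlt : R.IsAlt
  pair_symm : ∀ X Y Z W, g (R X Y Z) W = g (R Z W X) Y

/-- The curvature tensor `(X, Y) ↦ g(AY, ·)AX - g(AX, ·)AY` that the Gauss equation assigns to a
hypersurface with shape operator `A`; for `A = id` it has constant curvature `1`. -/
def gaussCurvature (g : V →ₗ[K] V →ₗ[K] K) (A : V →ₗ[K] V) : V →ₗ[K] V →ₗ[K] V →ₗ[K] V :=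
  let B : V →ₗ[K] V →ₗ[K] V →ₗ[K] V := LinearMap.smulRightₗ.compl₁₂ (g ∘ₗ A) A
  B.flip - B

/-- The Ricci tensor `Ric(X,Y) = tr (Z ↦ R(Z,X)Y)`. -/
noncomputable def ricci (R : V →ₗ[K] V →ₗ[K] V →ₗ[K] V) (X Y : V) : K :=
  LinearMap.trace K V ((R.flip X).flip Y)

/-- The map `X ↦ X - g(X,ξ)ξ`; for `g(ξ,ξ) = 1` it is the projection onto the orthogonal
complement of `ξ`. -/
def horizontalProj (g : V →ₗ[K] V →ₗ[K] K) (ξ : V) : V →ₗ[K] V :=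
  LinearMap.id - (g.flip ξ).smulRight ξ

variable {g : V →ₗ[K] V →ₗ[K] K} {R R' : V →ₗ[K] V →ₗ[K] V →ₗ[K] V} {A : V →ₗ[K] V} {ξ : V}

lemma eq_of_forall_apply_eq (hg : g.SeparatingLeft)
    (h : ∀ X Y Z W, g (R X Y Z) W = g (R' X Y Z) W) : R = R' := by
  ext X Y Z
  refine sub_eq_zero.mp (hg _ fun W => ?_)
  rw [map_sub, LinearMap.sub_apply, h, sub_self]

namespace IsBivectorSymm

lemma of_antisymm [NoZeroDivisors K] [NeZero (2 : K)] (hg : g.SeparatingLeft)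
    (hanti : ∀ X Y Z W, g (R X Y Z) W = -(g (R Y X Z) W))
    (hpair : ∀ X Y Z W, g (R X Y Z) W = g (R Z W X) Y) : IsBivectorSymm g R where
  isAlt X := by
    ext Z
    refine hg _ fun W => ?_
    have h2 : 2 * g (R X X Z) W = 0 := by linear_combination hanti X X Z W
    exact (mul_eq_zero.mp h2).resolve_left two_ne_zero
  pair_symm := hpair

lemma sub (hR : IsBivectorSymm g R) (hR' : IsBivectorSymm g R') : IsBivectorSymm g (R - R') where
  isAlt X := by simp [hR.isAlt.self_eq_zero, hR'.isAlt.self_eq_zero]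
  pair_symm X Y Z W := by simp [hR.pair_symm X Y, hR'.pair_symm X Y]

lemma smul (c : K) (hR : IsBivectorSymm g R) : IsBivectorSymm g (c • R) where
  isAlt X := by simp [hR.isAlt.self_eq_zero]
  pair_symm X Y Z W := by simp [hR.pair_symm X Y]

lemma apply_left_eq_zero (hg : g.SeparatingLeft) (hR : IsBivectorSymm g R)
    (hRξ : ∀ X Y, R X Y ξ = 0) : R ξ = 0 := by
  ext Y Z
  exact hg _ fun W => by rw [hR.pair_symm, hRξ, map_zero, LinearMap.zero_apply]

lemma apply_eq_quotientArea_mul (b : Basis (Fin 3) K V) (hR : IsBivectorSymm g R)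
    (hR₀ : R (b 0) = 0) (X Y Z W : V) :
    g (R X Y Z) W =
      quotientArea b X Y * quotientArea b Z W * g (R (b 1) (b 2) (b 1)) (b 2) := by
  have hR_area (X Y Z W : V) : g (R X Y Z) W = quotientArea b X Y * g (R (b 1) (b 2) Z) W := by
    rw [isAlt_apply_eq_quotientArea_smul b hR.isAlt hR₀]
    simp only [LinearMap.smul_apply, map_smul, smul_eq_mul]
  rw [hR_area, hR.pair_symm, hR_area, mul_assoc]

end IsBivectorSymm

lemma gaussCurvature_apply (X Y Z : V) :
    gaussCurvature g A X Y Z = g (A Y) Z • A X - g (A X) Z • A Y := rfl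

lemma isBivectorSymm_gaussCurvature (hA : (g ∘ₗ A).IsSymm) :
    IsBivectorSymm g (gaussCurvature g A) where
  isAlt X := by ext Z; simp [gaussCurvature_apply]
  pair_symm X Y Z W := by
    have hA' (X Y : V) : g (A X) Y = g (A Y) X := hA.eq X Y
    simp only [gaussCurvature_apply, map_sub, map_smul, LinearMap.sub_apply, LinearMap.smul_apply,
      smul_eq_mul, hA' Y Z, hA' X W, hA' X Z, hA' Y W]
    ring

lemma ricci_add (X Y : V) : ricci (R + R') X Y = ricci R X Y + ricci R' X Y :=
  map_add (LinearMap.trace K V) ((R.flip X).flip Y) ((R'.flip X).flip Y)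

lemma ricci_smul (c : K) (X Y : V) : ricci (c • R) X Y = c * ricci R X Y :=
  map_smul (LinearMap.trace K V) c ((R.flip X).flip Y)

lemma ricci_gaussCurvature [Module.Free K V] [Module.Finite K V] (X Y : V) :
    ricci (gaussCurvature g A) X Y = g ((LinearMap.trace K V A • A - A ∘ₗ A) X) Y := by
  have hflip : ((gaussCurvature g A).flip X).flip Y =
      g (A X) Y • A - (g.flip Y ∘ₗ A).smulRight (A X) := rfl
  simp [ricci, hflip, mul_comm]

lemma horizontalProj_apply (X : V) : horizontalProj g ξ X = X - g X ξ • ξ := rfl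

lemma horizontalProj_comp_self (hξ : g ξ ξ = 1) :
    horizontalProj g ξ ∘ₗ horizontalProj g ξ = horizontalProj g ξ := by
  ext X
  simp [horizontalProj_apply, hξ]

lemma isSymm_comp_horizontalProj (hg : g.IsSymm) : (g ∘ₗ horizontalProj g ξ).IsSymm where
  eq X Y := by
    have hg' (X Y : V) : g X Y = g Y X := hg.eq X Y
    simp [horizontalProj_apply, hg' ξ, hg' X Y, mul_comm]

lemma gaussCurvature_horizontalProj_apply_self (hξ : g ξ ξ = 1) (X Y : V) :
    gaussCurvature g (horizontalProj g ξ) X Y ξ = 0 := by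
  have hPξ (X : V) : g (horizontalProj g ξ X) ξ = 0 := by simp [horizontalProj_apply, hξ]
  simp [gaussCurvature_apply, hPξ]

lemma trace_horizontalProj [Module.Free K V] [Module.Finite K V] (hξ : g ξ ξ = 1) :
    LinearMap.trace K V (horizontalProj g ξ) = finrank K V - 1 := by
  simp [horizontalProj, hξ]

lemma ricci_gaussCurvature_id [Module.Free K V] [Module.Finite K V] (X Y : V) :
    ricci (gaussCurvature g .id) X Y = (finrank K V - 1) * g X Y := by
  simp [ricci_gaussCurvature, sub_mul]

lemma ricci_gaussCurvature_horizontalProj [Module.Free K V] [Module.Finite K V]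
    (hξ : g ξ ξ = 1) (X Y : V) :
    ricci (gaussCurvature g (horizontalProj g ξ)) X Y =
      (finrank K V - 2) * g (horizontalProj g ξ X) Y := by
  rw [ricci_gaussCurvature, trace_horizontalProj hξ, horizontalProj_comp_self hξ]
  simp only [LinearMap.sub_apply, LinearMap.smul_apply, map_sub, map_smul, smul_eq_mul]
  ring

lemma ricciOperator_eq [Module.Free K V] [Module.Finite K V] (hg : g.SeparatingLeft)
    (hξ : g ξ ξ = 1) {c κ : K}
    (hR : R = c • gaussCurvature g .id + κ • gaussCurvature g (horizontalProj g ξ))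
    {S : V →ₗ[K] V} (hS : ∀ X Y, g (S X) Y = ricci R X Y) :
    S = ((finrank K V - 1) * c) • .id + ((finrank K V - 2) * κ) • horizontalProj g ξ := by
  ext X
  refine sub_eq_zero.mp (hg _ fun Y => ?_)
  rw [map_sub, LinearMap.sub_apply, hS, hR, ricci_add, ricci_smul, ricci_smul,
    ricci_gaussCurvature_id, ricci_gaussCurvature_horizontalProj hξ]
  simp only [LinearMap.add_apply, LinearMap.smul_apply, LinearMap.id_apply, map_add, map_smul,
    smul_eq_mul]
  ring

lemma trace_ricciOperator_eq [Module.Free K V] [Module.Finite K V] (hg : g.SeparatingLeft)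
    (hξ : g ξ ξ = 1) {c κ : K}
    (hR : R = c • gaussCurvature g .id + κ • gaussCurvature g (horizontalProj g ξ))
    {S : V →ₗ[K] V} (hS : ∀ X Y, g (S X) Y = ricci R X Y) :
    LinearMap.trace K V S = (finrank K V - 1) * (finrank K V * c + (finrank K V - 2) * κ) := by
  rw [ricciOperator_eq hg hξ hR hS, map_add, map_smul, map_smul, LinearMap.trace_id,
    trace_horizontalProj hξ, smul_eq_mul, smul_eq_mul]
  ring

end CommRing

section Field

variable {K V : Type*} [Field K] [AddCommGroup V] [Module K V]
  {g : V →ₗ[K] V →ₗ[K] K} {R R' : V →ₗ[K] V →ₗ[K] V →ₗ[K] V} {ξ : V}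

lemma exists_basis_apply_zero_eq {n : ℕ} (hdim : finrank K V = n + 1) (hξ : ξ ≠ 0) :
    ∃ b : Basis (Fin (n + 1)) K V, b 0 = ξ := by
  have : FiniteDimensional K V := .of_finrank_pos (by lia)
  obtain ⟨f, hfξ⟩ : ∃ f : Module.Dual K V, f ξ = 1 :=
    Module.Projective.exists_dual_eq_one K hξ
  have hker : finrank K f.ker = n := by
    have hf : f ≠ 0 := fun hf => by simp [hf] at hfξ
    have := Module.Dual.finrank_ker_add_one_of_ne_zero hf
    lia
  refine ⟨.mkFinCons ξ (Module.finBasisOfFinrankEq K f.ker hker) (fun c X hX hcX => ?_)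
    fun X => ⟨-f X, by simp [hfξ]⟩, by simp⟩
  simpa [hfξ, LinearMap.mem_ker.mp hX] using congrArg f hcX

lemma IsBivectorSymm.exists_eq_smul (hdim : finrank K V = 3) (hg : g.SeparatingLeft) (hξ : ξ ≠ 0)
    (hR : IsBivectorSymm g R) (hRξ : ∀ X Y, R X Y ξ = 0)
    (hR' : IsBivectorSymm g R') (hR'ξ : ∀ X Y, R' X Y ξ = 0) (hR'_ne : R' ≠ 0) :
    ∃ κ : K, R = κ • R' := by
  obtain ⟨b, rfl⟩ := exists_basis_apply_zero_eq hdim hξ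
  have hR_eq := hR.apply_eq_quotientArea_mul b (hR.apply_left_eq_zero hg hRξ)
  have hR'_eq := hR'.apply_eq_quotientArea_mul b (hR'.apply_left_eq_zero hg hR'ξ)
  have hγ : g (R' (b 1) (b 2) (b 1)) (b 2) ≠ 0 := fun h =>
    hR'_ne <| eq_of_forall_apply_eq hg fun X Y Z W => by simp [hR'_eq X Y Z W, h]
  refine ⟨g (R (b 1) (b 2) (b 1)) (b 2) / g (R' (b 1) (b 2) (b 1)) (b 2),
    eq_of_forall_apply_eq hg fun X Y Z W => ?_⟩
  simp only [LinearMap.smul_apply, map_smul, smul_eq_mul]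
  rw [hR_eq, hR'_eq X Y Z W]
  field_simp

lemma horizontalProj_ne_zero (hdim : 1 < finrank K V) : horizontalProj g ξ ≠ 0 := fun h =>
  hdim.not_ge <| finrank_le_one ξ fun X =>
    ⟨g X ξ, (sub_eq_zero.mp (LinearMap.congr_fun h X)).symm⟩

lemma gaussCurvature_horizontalProj_ne_zero (hdim : finrank K V = 3)
    (hg : g.SeparatingLeft) (hξ : g ξ ξ = 1) : gaussCurvature g (horizontalProj g ξ) ≠ 0 := by
  have : FiniteDimensional K V := .of_finrank_pos (by lia)
  intro h
  refine horizontalProj_ne_zero (g := g) (ξ := ξ) (by lia) ?_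
  ext X
  refine hg _ fun Y => ?_
  calc g (horizontalProj g ξ X) Y
    _ = ricci (gaussCurvature g (horizontalProj g ξ)) X Y := by
      rw [ricci_gaussCurvature_horizontalProj hξ, hdim]; norm_num
    _ = 0 := by rw [h]; exact map_zero (LinearMap.trace K V)

lemma exists_eq_gaussCurvature_add (hdim : finrank K V = 3)
    (hgs : g.IsSymm) (hg : g.SeparatingLeft) (hξ : g ξ ξ = 1) (hR : IsBivectorSymm g R) {c : K}
    (hRξ : ∀ X Y, R X Y ξ = c • (g Y ξ • X - g X ξ • Y)) :
    ∃ κ : K, R = c • gaussCurvature g .id + κ • gaussCurvature g (horizontalProj g ξ) := by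
  have hξ_ne : ξ ≠ 0 := by rintro rfl; simp at hξ
  have hid : IsBivectorSymm g (gaussCurvature g .id) := isBivectorSymm_gaussCurvature hgs
  obtain ⟨κ, hκ⟩ := (hR.sub (hid.smul c)).exists_eq_smul hdim hg hξ_ne
    (fun X Y => by simp [hRξ, gaussCurvature_apply])
    (isBivectorSymm_gaussCurvature (isSymm_comp_horizontalProj hgs))
    (gaussCurvature_horizontalProj_apply_self hξ)
    (gaussCurvature_horizontalProj_ne_zero hdim hg hξ)
  exact ⟨κ, by rw [← hκ]; abel⟩

theorem curvature_of_alpha_para_kenmotsu_form_general [NeZero (2 : K)] (hdim : finrank K V = 3)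
    (hgs : g.IsSymm) (hg : g.SeparatingLeft) (hξ : g ξ ξ = 1) (hR : IsBivectorSymm g R)
    {S : V →ₗ[K] V} (hS : ∀ X Y, g (S X) Y = ricci R X Y) {τ : K} (hτ : τ = LinearMap.trace K V S)
    {c : K} (hRξ : ∀ X Y, R X Y ξ = c • (g Y ξ • X - g X ξ • Y)) (X Y Z : V) :
    R X Y Z =
      (τ / 2 - 2 * c) • (g Y Z • X - g X Z • Y)
        - ((τ / 2 - 3 * c) * (g Y Z * g X ξ - g X Z * g Y ξ)) • ξ
        + ((τ / 2 - 3 * c) * g Z ξ) • (g X ξ • Y - g Y ξ • X) := by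
  obtain ⟨κ, hκ⟩ := exists_eq_gaussCurvature_add hdim hgs hg hξ hR hRξ
  have : FiniteDimensional K V := .of_finrank_pos (by lia)
  have hτ_half : τ / 2 = 3 * c + κ := by
    rw [hτ, trace_ricciOperator_eq hg hξ hκ hS, hdim, div_eq_iff two_ne_zero]
    push_cast
    ring
  have hgξ : g ξ Z = g Z ξ := hgs.eq ξ Z
  rw [hκ, hτ_half]
  simp only [LinearMap.add_apply, LinearMap.smul_apply, gaussCurvature_apply, LinearMap.id_apply,
    horizontalProj_apply, map_sub, map_smul, LinearMap.sub_apply, smul_eq_mul, hgξ]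
  module

end Field

/-- If a curvature-like tensor on a 3-dimensional pseudo-metric vector space satisfies
`R(X,Y)ξ = α²(η(Y)X - η(X)Y)` (with `η = g(·,ξ)`, `g(ξ,ξ) = 1`), then it has the
α-para Kenmotsu form
`R(X,Y)Z = (τ/2 - 2α²)(g(Y,Z)X - g(X,Z)Y) - (τ/2 - 3α²)(g(Y,Z)η(X) - g(X,Z)η(Y))ξ
  + (τ/2 - 3α²)(η(X)Y - η(Y)X)η(Z)`. -/
theorem curvature_of_alpha_para_kenmotsu_form
    {V : Type*} [AddCommGroup V] [Module ℝ V] [FiniteDimensional ℝ V]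
    (hdim : Module.finrank ℝ V = 3)
    (g : V →ₗ[ℝ] V →ₗ[ℝ] ℝ)
    (hgsymm : ∀ X Y : V, g X Y = g Y X)
    (hgnd : ∀ X : V, (∀ Y : V, g X Y = 0) → X = 0)
    (ξ : V) (hξ : g ξ ξ = 1)
    (η : V → ℝ) (hη : ∀ X : V, η X = g X ξ)
    (R : V →ₗ[ℝ] V →ₗ[ℝ] V →ₗ[ℝ] V)
    (hanti : ∀ X Y Z W : V, g (R X Y Z) W = -(g (R Y X Z) W))
    (hpair : ∀ X Y Z W : V, g (R X Y Z) W = g (R Z W X) Y)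
    (hbianchi : ∀ X Y Z W : V,
      g (R X Y Z) W + g (R Y Z X) W + g (R Z X Y) W = 0)
    (Ric : V → V → ℝ)
    (hRic : ∀ X Y : V, Ric X Y = LinearMap.trace ℝ V ((R.flip X).flip Y))
    (S : V →ₗ[ℝ] V)
    (hS : ∀ X Y : V, g (S X) Y = Ric X Y)
    (τ : ℝ) (hτ : τ = LinearMap.trace ℝ V S)
    (α : ℝ)
    (hRξ : ∀ X Y : V, R X Y ξ = α ^ 2 • (η Y • X - η X • Y)) :
    ∀ X Y Z : V, R X Y Z =
      (τ / 2 - 2 * α ^ 2) • (g Y Z • X - g X Z • Y)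
        - ((τ / 2 - 3 * α ^ 2) * (g Y Z * η X - g X Z * η Y)) • ξ
        + ((τ / 2 - 3 * α ^ 2) * η Z) • (η X • Y - η Y • X) := by
  simp only [hη] at hRξ ⊢
  exact curvature_of_alpha_para_kenmotsu_form_general hdim ⟨hgsymm⟩ hgnd hξ
    (.of_antisymm hgnd hanti hpair) (fun X Y => (hS X Y).trans (hRic X Y)) hτ hRξ
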